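/- Let l ≥ 1, let k_1, …, k_l be positive integers with k = Σ k_i, and let d_1, …, d_l be positive integers with d = Σ d_i. Partition the variables w_1, …, w_k into l consecutive blocks, block i of size k_i, and let θ_1, …, θ_r be real polynomials in w_1, …, w_k such that every monomial of every θ_j has total degree at most d_i in the variables of block i. Define v = (k_1/k, …, k_l/k), u = (d_1/d, …, d_l/d), and H(v|u) = Σ_{i=1}^l (k_i/k)·lg(d·k_i/(k·d_i)). If y ∈ ℝ^r is a regular value of f = (θ_1, …, θ_r) : ℝ^k → ℝ^r, then f⁻¹(y) has at most (2d)^k · 2^{−k·H(v|u)} connected components. -/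

import Mathlib

/-!
The fibre is the zero set of `g = ∑ j, (θ j - y j) ^ 2`, whose block degrees are at most `2 * d i`.
Given a partition of the fibre into `n` nonempty clopen pieces, separate the pieces by disjoint
open sets whose frontiers avoid the fibre. For `M` large and `a` small, `M * g + |w|² - ⟨a, w⟩` has
a local minimum in each of these open sets, and by Sard's theorem its critical points are all
nondegenerate for suitable `a`.

There is a Bézout bound for the nondegenerate zeros `p i` of a square system `F` of block degrees at
most `e`. With polynomials `h j` such that `h j (p i) = δ i j`, the linear map sending `(Q j)` to
`∑ j, h j * Q j (F)` is injective. Comparing the dimensions of spaces of polynomials as the degree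
of the `Q j` tends to infinity gives at most `multinomial k * ∏ i, e i ^ k i` zeros.
Hence `n ≤ multinomial k * ∏ i, (2 * d i) ^ k i`. The term of exponent `k` in the multinomial
expansion of `(∑ i, k i) ^ K` bounds this by the entropy expression, and a bound on the number of
pieces of all clopen partitions bounds the number of connected components.
-/

open MvPolynomial Filter Topology

theorem card_subtype_sum_le (α : Type*) [Fintype α] (n : ℕ) :
    Nat.card {x : α → ℕ // ∑ a, x a ≤ n} =
      (Fintype.card α + n).choose (Fintype.card α) := by
  classical
  -- The slack `n - ∑ a, x a` becomes the coordinate at `none`.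
  let e : {x : α → ℕ // ∑ a, x a ≤ n} ≃ {x : Option α → ℕ // ∑ o, x o = n} :=
    { toFun x := ⟨fun o => o.elim (n - ∑ a, x.1 a) x.1, by simp [Fintype.sum_option, x.2]⟩
      invFun x := ⟨fun a => x.1 (some a), by simp [← x.2, Fintype.sum_option]⟩
      left_inv _ := rfl
      right_inv := by
        rintro ⟨x, rfl⟩
        ext (_ | a) <;> simp [Fintype.sum_option] }
  rw [Nat.card_congr (e.trans (Sym.equivNatSumOfFintype (Option α) n).symm),
    Nat.card_eq_fintype_card, Sym.card_sym_eq_choose, Nat.choose_symm_add]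
  simp

theorem tendsto_choose_div_pow (m e c : ℕ) :
    Tendsto (fun T : ℕ => ((m + (T * e + c)).choose m : ℝ) / (T : ℝ) ^ m) atTop
      (𝓝 ((e : ℝ) ^ m / m.factorial)) := by
  have hfactor (j : ℕ) : Tendsto (fun T : ℕ => e + (c + 1 + j : ℝ) / T) atTop (𝓝 (e : ℝ)) := by
    simpa using (tendsto_const_div_atTop_nhds_zero_nat (c + 1 + j : ℝ)).const_add (e : ℝ)
  have hprod := (tendsto_finsetProd (Finset.range m) fun j _ => hfactor j).div_const
    (m.factorial : ℝ)
  rw [Finset.prod_const, Finset.card_range] at hprod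
  refine hprod.congr' ?_
  filter_upwards [eventually_ne_atTop 0] with T hT
  have hT' : (T : ℝ) ≠ 0 := Nat.cast_ne_zero.2 hT
  have hchoose : (m.factorial : ℝ) * (m + (T * e + c)).choose m =
      ∏ j ∈ Finset.range m, (T * (e + (c + 1 + j : ℝ) / T)) := by
    rw [add_comm m, ← Nat.cast_mul, ← Nat.ascFactorial_eq_factorial_mul_choose,
      Nat.ascFactorial_eq_prod_range, Nat.cast_prod]
    refine Finset.prod_congr rfl fun j _ => ?_
    push_cast
    field_simp
    ring
  rw [Finset.prod_mul_distrib, Finset.prod_const, Finset.card_range] at hchoose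
  rw [div_eq_div_iff (by positivity) (by positivity), mul_comm _ (_ ^ m), ← hchoose, mul_comm]

theorem multinomial_mul_prod_pow_self_le {ι : Type*} [Fintype ι] (k : ι → ℕ) :
    Nat.multinomial Finset.univ k * ∏ i, k i ^ k i ≤ (∑ i, k i) ^ ∑ i, k i := by
  classical
  rw [Finset.sum_pow_eq_sum_piAntidiag]
  exact Finset.single_le_sum
    (f := fun m : ι → ℕ => Nat.multinomial Finset.univ m * ∏ i, k i ^ m i)
    (fun _ _ => Nat.zero_le _) (by simp)

section BlockDegree

variable {ι : Type*} {κ : ι → Type*} [∀ i, Fintype (κ i)]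

/-- Exponent vectors of block degrees at most `d`, the variables being partitioned into the blocks
`κ i`. -/
def blockExponents (κ : ι → Type*) [∀ i, Fintype (κ i)] (d : ι → ℕ) : Set (((i : ι) × κ i) →₀ ℕ) :=
  {m | ∀ i, ∑ t, m ⟨i, t⟩ ≤ d i}

/-- Polynomials of degree at most `d i` in the variables of each block `κ i`, the blockwise analogue
of `MvPolynomial.restrictTotalDegree`. -/
noncomputable abbrev restrictBlockDegree (κ : ι → Type*) [∀ i, Fintype (κ i)] (R : Type*)
    [CommSemiring R] (d : ι → ℕ) : Submodule R (MvPolynomial ((i : ι) × κ i) R) :=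
  restrictSupport R (blockExponents κ d)

section Semiring

variable {R : Type*} [CommSemiring R] {d e : ι → ℕ} {p q : MvPolynomial ((i : ι) × κ i) R}

theorem restrictBlockDegree_mono (h : d ≤ e) :
    restrictBlockDegree κ R d ≤ restrictBlockDegree κ R e :=
  restrictSupport_mono R fun _ hm i => (hm i).trans (h i)

theorem C_mem_restrictBlockDegree (d : ι → ℕ) (a : R) : C a ∈ restrictBlockDegree κ R d := by
  rw [C_apply, monomial_mem_restrictSupport]
  exact Or.inl fun i => by simp

theorem X_mem_restrictBlockDegree (s : (i : ι) × κ i) (hd : 1 ≤ d s.1) :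
    X s ∈ restrictBlockDegree κ R d := by
  classical
  rw [X, monomial_mem_restrictSupport]
  refine Or.inl fun i => ?_
  obtain ⟨j, u⟩ := s
  obtain rfl | hij := eq_or_ne i j
  · simpa [Finsupp.single_apply] using hd
  · have (t : κ i) : (⟨j, u⟩ : (i : ι) × κ i) ≠ ⟨i, t⟩ := fun h => hij (congrArg Sigma.fst h).symm
    simp [this]

theorem mul_mem_restrictBlockDegree (hp : p ∈ restrictBlockDegree κ R d)
    (hq : q ∈ restrictBlockDegree κ R e) : p * q ∈ restrictBlockDegree κ R (d + e) := by
  have hpq := Submodule.mul_mem_mul hp hq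
  rw [← restrictSupport_add] at hpq
  refine restrictSupport_mono R ?_ hpq
  rintro _ ⟨m, hm, n, hn, rfl⟩ i
  simpa [Finset.sum_add_distrib] using add_le_add (hm i) (hn i)

theorem pow_mem_restrictBlockDegree (hp : p ∈ restrictBlockDegree κ R d) (n : ℕ) :
    p ^ n ∈ restrictBlockDegree κ R (n • d) := by
  induction n with
  | zero => simpa using C_mem_restrictBlockDegree (κ := κ) (R := R) 0 1
  | succ n ih =>
    rw [pow_succ, succ_nsmul]
    exact mul_mem_restrictBlockDegree ih hp

theorem prod_mem_restrictBlockDegree {τ : Type*} (s : Finset τ) {d : τ → ι → ℕ}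
    {p : τ → MvPolynomial ((i : ι) × κ i) R} (hp : ∀ t ∈ s, p t ∈ restrictBlockDegree κ R (d t)) :
    ∏ t ∈ s, p t ∈ restrictBlockDegree κ R (∑ t ∈ s, d t) := by
  classical
  induction s using Finset.induction_on with
  | empty => simpa using C_mem_restrictBlockDegree (κ := κ) (R := R) 0 1
  | insert t s ht ih =>
    rw [Finset.prod_insert ht, Finset.sum_insert ht]
    exact mul_mem_restrictBlockDegree (hp t (by simp)) (ih fun u hu => hp u (by simp [hu]))

theorem pderiv_mem_restrictBlockDegree (s : (i : ι) × κ i)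
    (hp : p ∈ restrictBlockDegree κ R d) : pderiv s p ∈ restrictBlockDegree κ R d := by
  rw [p.as_sum, map_sum]
  refine Submodule.sum_mem _ fun m hm => ?_
  rw [pderiv_monomial, monomial_mem_restrictSupport]
  exact Or.inl fun i => (Finset.sum_le_sum fun t _ => by simp).trans (hp hm i)

theorem mem_restrictBlockDegree_totalDegree (p : MvPolynomial ((i : ι) × κ i) R) :
    p ∈ restrictBlockDegree κ R fun _ => p.totalDegree := by
  classical
  intro m hm i
  calc ∑ t, m ⟨i, t⟩ = ∑ s ∈ Finset.univ.map (Function.Embedding.sigmaMk i), m s := by simp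
    _ ≤ m.sum fun _ n => n := by
      rw [Finsupp.sum, ← Finset.sum_filter_ne_zero]
      exact Finset.sum_le_sum_of_subset fun s hs => by simpa using (Finset.mem_filter.1 hs).2
    _ ≤ p.totalDegree := le_totalDegree hm

theorem aeval_mem_restrictBlockDegree {τ : Type*} [Finite τ]
    {F : τ → MvPolynomial ((i : ι) × κ i) R} (hF : ∀ t, F t ∈ restrictBlockDegree κ R d) {T : ℕ}
    {q : MvPolynomial τ R} (hq : q.totalDegree ≤ T) :
    aeval F q ∈ restrictBlockDegree κ R (T • d) := by
  cases nonempty_fintype τ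
  rw [aeval_def, eval₂_eq']
  refine Submodule.sum_mem _ fun m hm => ?_
  rw [algebraMap_eq, ← smul_eq_C_mul]
  refine Submodule.smul_mem _ _ (restrictBlockDegree_mono ?_
    (prod_mem_restrictBlockDegree Finset.univ fun t _ => pow_mem_restrictBlockDegree (hF t) (m t)))
  rw [← Finset.sum_smul, ← Finsupp.sum_fintype m (fun _ n => n) fun _ => rfl]
  exact nsmul_le_nsmul_left zero_le ((le_totalDegree hm).trans hq)

end Semiring

variable [Fintype ι] (κ)

theorem card_blockExponents (d : ι → ℕ) :
    Nat.card (blockExponents κ d) =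
      ∏ i, (Fintype.card (κ i) + d i).choose (Fintype.card (κ i)) := by
  let e : blockExponents κ d ≃ ((i : ι) → {x : κ i → ℕ // ∑ t, x t ≤ d i}) :=
    ((Finsupp.equivFunOnFinite.trans (Equiv.piCurry fun i (_ : κ i) => ℕ)).subtypeEquiv
      fun _ => Iff.rfl).trans (Equiv.subtypePiEquivPi (p := fun i x => ∑ t, x t ≤ d i))
  simp_rw [Nat.card_congr e, Nat.card_pi, card_subtype_sum_le]

variable (R : Type*) [CommSemiring R] [StrongRankCondition R]

theorem finrank_restrictBlockDegree (d : ι → ℕ) :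
    Module.finrank R (restrictBlockDegree κ R d) =
      ∏ i, (Fintype.card (κ i) + d i).choose (Fintype.card (κ i)) := by
  rw [Module.finrank_eq_nat_card_basis (basisRestrictSupport R _), card_blockExponents]

theorem finrank_restrictTotalDegree (σ : Type*) [Fintype σ] (T : ℕ) :
    Module.finrank R (restrictTotalDegree σ R T) =
      (Fintype.card σ + T).choose (Fintype.card σ) := by
  rw [restrictTotalDegree, Module.finrank_eq_nat_card_basis (basisRestrictSupport R _),
    ← card_subtype_sum_le]
  exact Nat.card_congr (Finsupp.equivFunOnFinite.subtypeEquiv fun m => by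
    simp [Finsupp.sum_fintype])

end BlockDegree

section Bezout

variable {σ τ : Type*}

theorem exists_eval_eq_one_eval_eq_zero {k : Type*} [Field k] (s : Finset (σ → k)) {x : σ → k}
    (hx : x ∉ s) : ∃ h : MvPolynomial σ k, eval x h = 1 ∧ ∀ y ∈ s, eval y h = 0 := by
  classical
  induction s using Finset.induction_on with
  | empty => exact ⟨1, by simp, by simp⟩
  | insert y s _ ih =>
    rw [Finset.mem_insert, not_or] at hx
    obtain ⟨h, hhx, hhs⟩ := ih hx.2
    obtain ⟨i, hi⟩ := Function.ne_iff.1 hx.1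
    refine ⟨C (x i - y i)⁻¹ * (X i - C (y i)) * h, ?_, ?_⟩
    · simp [hhx, sub_ne_zero.2 hi]
    · simp +contextual [hhs]

/-- The polynomial map between affine spaces with coordinate functions `F`. -/
noncomputable def polyMap {R : Type*} [CommSemiring R] (F : τ → MvPolynomial σ R) (w : σ → R) :
    τ → R :=
  fun t => eval w (F t)

theorem eval_aeval_eq_eval_polyMap {R : Type*} [CommSemiring R] (F : τ → MvPolynomial σ R)
    (w : σ → R) (q : MvPolynomial τ R) : eval w (aeval F q) = eval (polyMap F w) q := by
  simpa [coe_aeval_eq_eval] using! comp_aeval_apply (f := F) (aeval (R := R) w) q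

theorem exists_interpolation {ν k : Type*} [Finite ν] [DecidableEq ν] [Field k] {p : ν → σ → k}
    (hp : Function.Injective p) :
    ∃ h : ν → MvPolynomial σ k, (Matrix.of fun i j => eval (p i) (h j)) = 1 := by
  classical
  cases nonempty_fintype ν
  choose h hh₁ hh₀ using fun j => exists_eval_eq_one_eval_eq_zero
    (s := (Finset.univ.erase j).image p) (x := p j) (by simp [hp.eq_iff])
  refine ⟨h, Matrix.ext fun i j => ?_⟩
  obtain rfl | hij := eq_or_ne i j
  · simpa using hh₁ i
  · simpa [hij] using hh₀ j (p i) (Finset.mem_image_of_mem p (by simp [hij]))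

/-- A zero of the square system `F` at which its Jacobian determinant does not vanish. The Bézout
bound `card_nondegenerateZero_le` counts these. -/
def IsNondegenerateZero (F : σ → MvPolynomial σ ℝ) (p : σ → ℝ) : Prop :=
  polyMap F p = 0 ∧ (fderiv ℝ (polyMap F) p).det ≠ 0

theorem analyticAt_polyMap {𝕜 : Type*} [NontriviallyNormedField 𝕜] [CompleteSpace 𝕜] [Fintype σ]
    [Fintype τ] (F : τ → MvPolynomial σ 𝕜) (w : σ → 𝕜) : AnalyticAt 𝕜 (polyMap F) w :=
  analyticAt_pi_iff.2 fun t => AnalyticOnNhd.eval_mvPolynomial (F t) w (Set.mem_univ w)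

variable [Finite σ]

theorem IsNondegenerateZero.exists_local_right_inverse {F : σ → MvPolynomial σ ℝ} {p : σ → ℝ}
    (hp : IsNondegenerateZero F p) :
    ∃ φ : (σ → ℝ) → (σ → ℝ), Tendsto φ (𝓝 0) (𝓝 p) ∧ ∀ᶠ z in 𝓝 0, polyMap F (φ z) = z := by
  cases nonempty_fintype σ
  have hF : HasStrictFDerivAt (polyMap F)
      ((fderiv ℝ (polyMap F) p).toContinuousLinearEquivOfDetNeZero hp.2 : (σ → ℝ) →L[ℝ] (σ → ℝ))
      p := by
    simpa using (analyticAt_polyMap F p).hasStrictFDerivAt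
  exact ⟨hF.localInverse _ _ p, by simpa [hp.1] using hF.localInverse_tendsto,
    by simpa [hp.1] using hF.eventually_right_inverse⟩

theorem eq_zero_of_eventually_eval_eq_zero {𝕜 : Type*} [NontriviallyNormedField 𝕜]
    {q : MvPolynomial σ 𝕜} {x : σ → 𝕜} (h : ∀ᶠ z in 𝓝 x, eval z q = 0) : q = 0 := by
  cases nonempty_fintype σ
  obtain ⟨ε, hε, hball⟩ := Metric.eventually_nhds_iff_ball.1 h
  refine funext_set (fun s => Metric.ball (x s) ε)
    (fun s => infinite_of_mem_nhds (x s) (Metric.ball_mem_nhds _ hε)) fun z hz => ?_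
  rw [map_zero]
  exact hball z (by rwa [ball_pi x hε])

/-- Near `0` the local right inverses `φ i` of `F` at the points `p i` turn the relation into the
linear system `∑ j, h j (φ i z) * Q j z = 0`, whose determinant is nonzero at `z = 0`. -/
theorem eq_zero_of_sum_mul_aeval_eq_zero {ν : Type*} [Fintype ν] [DecidableEq ν]
    {F : σ → MvPolynomial σ ℝ} {p : ν → σ → ℝ} (hp : ∀ i, IsNondegenerateZero F (p i))
    {h : ν → MvPolynomial σ ℝ} (hdet : (Matrix.of fun i j => eval (p i) (h j)).det ≠ 0)
    {Q : ν → MvPolynomial σ ℝ} (hQ : ∑ j, h j * aeval F (Q j) = 0) : Q = 0 := by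
  choose φ hφ hFφ using fun i => (hp i).exists_local_right_inverse
  let A (z : σ → ℝ) : Matrix ν ν ℝ := Matrix.of fun i j => eval (φ i z) (h j)
  have hA : Tendsto A (𝓝 0) (𝓝 (Matrix.of fun i j => eval (p i) (h j))) :=
    tendsto_pi_nhds.2 fun i => tendsto_pi_nhds.2 fun j =>
      ((continuous_eval (h j)).tendsto (p i)).comp (hφ i)
  have hAdet : ∀ᶠ z in 𝓝 0, (A z).det ≠ 0 :=
    ((continuous_id.matrix_det.tendsto _).comp hA).eventually_ne hdet
  have hvanish : ∀ᶠ z in 𝓝 0, (fun j => eval z (Q j)) = 0 := by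
    filter_upwards [hAdet, eventually_all.2 hFφ] with z hz hFz
    refine Matrix.eq_zero_of_mulVec_eq_zero hz (funext fun i => ?_)
    change ∑ j, eval (φ i z) (h j) * eval z (Q j) = 0
    simpa only [map_sum, map_mul, eval_aeval_eq_eval_polyMap, hFz, map_zero] using
      congrArg (eval (φ i z)) hQ
  exact funext fun j => eq_zero_of_eventually_eval_eq_zero (hvanish.mono fun z hz => congrFun hz j)

variable {ι : Type*} {κ : ι → Type*} [Fintype ι] [∀ i, Fintype (κ i)] {d : ι → ℕ}
  {F : (i : ι) × κ i → MvPolynomial ((i : ι) × κ i) ℝ}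
  {ν : Type*} [Fintype ν] {p : ν → (i : ι) × κ i → ℝ}

theorem exists_card_mul_choose_le (hF : ∀ s, F s ∈ restrictBlockDegree κ ℝ d)
    (hinj : Function.Injective p) (hp : ∀ i, IsNondegenerateZero F (p i)) :
    ∃ c : ℕ, ∀ T : ℕ,
      Fintype.card ν * (∑ i, Fintype.card (κ i) + T).choose (∑ i, Fintype.card (κ i)) ≤
        ∏ i, (Fintype.card (κ i) + (T * d i + c)).choose (Fintype.card (κ i)) := by
  classical
  obtain ⟨h, hh⟩ := exists_interpolation hinj
  let c := ∑ j, (h j).totalDegree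
  refine ⟨c, fun T => ?_⟩
  let e : ι → ℕ := fun i => T * d i + c
  let Φ : (ν → restrictTotalDegree ((i : ι) × κ i) ℝ T) →ₗ[ℝ] MvPolynomial ((i : ι) × κ i) ℝ :=
    ∑ j, LinearMap.mulLeft ℝ (h j) ∘ₗ (aeval F).toLinearMap ∘ₗ
      Submodule.subtype _ ∘ₗ LinearMap.proj j
  have hΦ_apply (Q) : Φ Q = ∑ j, h j * aeval F (Q j).1 := by simp [Φ]
  have hΦ_mem (Q) : Φ Q ∈ restrictBlockDegree κ ℝ e := by
    rw [hΦ_apply]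
    refine Submodule.sum_mem _ fun j _ => ?_
    rw [mul_comm]
    refine restrictBlockDegree_mono (fun i => ?_) (mul_mem_restrictBlockDegree
      (aeval_mem_restrictBlockDegree hF ((mem_restrictTotalDegree ..).1 (Q j).2))
      (mem_restrictBlockDegree_totalDegree (h j)))
    exact Nat.add_le_add_left (Finset.single_le_sum (f := fun j => (h j).totalDegree)
      (fun _ _ => Nat.zero_le _) (Finset.mem_univ j)) _
  have hΦ_inj : Function.Injective (Φ.codRestrict _ hΦ_mem) := by
    refine (injective_iff_map_eq_zero _).2 fun Q hQ => funext fun j => Subtype.ext ?_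
    rw [Subtype.ext_iff, LinearMap.codRestrict_apply, hΦ_apply] at hQ
    exact congrFun (eq_zero_of_sum_mul_aeval_eq_zero hp (by simp [hh]) hQ) j
  have : Module.Finite ℝ (restrictBlockDegree κ ℝ e) := Module.finite_of_finrank_pos <| by
    rw [finrank_restrictBlockDegree]
    exact Finset.prod_pos fun i _ => Nat.choose_pos (Nat.le_add_right _ _)
  simpa [Module.finrank_pi_fintype, finrank_restrictTotalDegree, finrank_restrictBlockDegree, e]
    using LinearMap.finrank_le_finrank_of_injective hΦ_inj

/-- Compare the leading terms in `T` of `exists_card_mul_choose_le`. -/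
theorem card_nondegenerateZero_le (hF : ∀ s, F s ∈ restrictBlockDegree κ ℝ d)
    (hinj : Function.Injective p) (hp : ∀ i, IsNondegenerateZero F (p i)) :
    Fintype.card ν ≤
      Nat.multinomial Finset.univ (fun i => Fintype.card (κ i)) *
        ∏ i, d i ^ Fintype.card (κ i) := by
  obtain ⟨c, hc⟩ := exists_card_mul_choose_le hF hinj hp
  let k (i : ι) := Fintype.card (κ i)
  have hleft : Tendsto (fun T : ℕ => Fintype.card ν *
      (((∑ i, k i + T).choose (∑ i, k i) : ℝ) / (T : ℝ) ^ ∑ i, k i)) atTop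
      (𝓝 (Fintype.card ν * (1 / (∑ i, k i).factorial))) := by
    simpa using (tendsto_choose_div_pow (∑ i, k i) 1 0).const_mul (Fintype.card ν : ℝ)
  have hright := tendsto_finsetProd Finset.univ fun i _ => tendsto_choose_div_pow (k i) (d i) c
  have hle : (Fintype.card ν : ℝ) * (1 / (∑ i, k i).factorial) ≤
      ∏ i, ((d i : ℝ) ^ k i / (k i).factorial) := by
    refine le_of_tendsto_of_tendsto' hleft hright fun T => ?_
    rw [Finset.prod_div_distrib, Finset.prod_pow_eq_pow_sum, ← mul_div_assoc]
    gcongr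
    exact_mod_cast hc T
  rw [Finset.prod_div_distrib, mul_one_div, div_le_div_iff₀ (by positivity) (by positivity)] at hle
  norm_cast at hle
  rw [← Nat.multinomial_spec] at hle
  exact Nat.le_of_mul_le_mul_right (hle.trans_eq (by ring))
    (Finset.prod_pos fun i _ => Nat.factorial_pos _)

end Bezout

section CriticalPoints

variable {σ : Type*}

theorem hasFDerivAt_eval [Fintype σ] (q : MvPolynomial σ ℝ) (w : σ → ℝ) :
    HasFDerivAt (fun x => eval x q)
      (∑ s, eval w (pderiv s q) • ContinuousLinearMap.proj (R := ℝ) (φ := fun _ : σ => ℝ) s) w := by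
  classical
  induction q using MvPolynomial.induction_on with
  | C a => simpa using hasFDerivAt_const a w
  | add p q hp hq => simpa [add_smul, Finset.sum_add_distrib] using hp.fun_add hq
  | mul_X p t hp =>
    have hX := (ContinuousLinearMap.proj (R := ℝ) (φ := fun _ : σ => ℝ) t).hasFDerivAt (x := w)
    convert! hp.fun_mul hX using 1
    · simp
    · simp [add_smul, Finset.sum_add_distrib, Finset.smul_sum, smul_smul, pderiv_X,
        Pi.single_apply, apply_ite]

theorem eval_pderiv_eq_zero_of_isLocalMin [Finite σ] {q : MvPolynomial σ ℝ} {w : σ → ℝ}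
    (h : IsLocalMin (fun x => eval x q) w) (s : σ) : eval w (pderiv s q) = 0 := by
  classical
  cases nonempty_fintype σ
  simpa [Pi.single_apply] using
    DFunLike.congr_fun (h.hasFDerivAt_eq_zero (hasFDerivAt_eval q w)) (Pi.single s 1)

theorem dense_regularValues {E : Type*} [NormedAddCommGroup E] [NormedSpace ℝ E]
    [FiniteDimensional ℝ E] {f : E → E} (hf : Differentiable ℝ f) :
    Dense {y | ∀ x, f x = y → (fderiv ℝ f x).det ≠ 0} := by
  borelize E
  let μ : MeasureTheory.Measure E := MeasureTheory.Measure.addHaar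
  have hnull : μ (f '' {x | (fderiv ℝ f x).det = 0}) = 0 :=
    MeasureTheory.addHaar_image_eq_zero_of_det_fderivWithin_eq_zero μ
      (fun x _ => (hf x).hasFDerivAt.hasFDerivWithinAt) fun _ hx => hx
  refine MeasureTheory.Measure.dense_of_ae (μ := μ) ?_
  filter_upwards [MeasureTheory.measure_eq_zero_iff_ae_notMem.1 hnull] with y hy x hxy hdet
  exact hy ⟨x, hdet, hxy⟩

theorem eventually_exists_isLocalMin {A X : Type*} [TopologicalSpace A] [TopologicalSpace X]
    {Φ : A → X → ℝ} (hΦ : Continuous fun z : A × X => Φ z.1 z.2) {a₀ : A} {s t : Set X}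
    (ht : IsCompact t) (hs : IsOpen s) (hst : s ⊆ t) {x : X} (hx : x ∈ t)
    (hlt : ∀ w ∈ t \ s, Φ a₀ x < Φ a₀ w) :
    ∀ᶠ a in 𝓝 a₀, ∃ p ∈ s, IsLocalMin (Φ a) p := by
  have hnear : ∀ᶠ a in 𝓝 a₀, ∀ w ∈ t \ s, Φ a x < Φ a w := by
    refine (ht.diff hs).eventually_forall_of_forall_eventually fun w hw => ?_
    have hΦx : Continuous fun z : A × X => Φ z.1 x :=
      hΦ.comp (continuous_fst.prodMk continuous_const)
    exact (hΦx.tendsto (a₀, w)).eventually_lt (hΦ.tendsto (a₀, w)) (hlt w hw)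
  refine hnear.mono fun a ha => ?_
  exact ht.exists_isLocalMin_mem_open hst
    (hΦ.comp (continuous_const.prodMk continuous_id)).continuousOn hx ha hs

theorem eventually_forall_lt_mul_add {X : Type*} [TopologicalSpace X] {K : Set X}
    (hK : IsCompact K) {g q : X → ℝ} (hg : Continuous g) (hq : Continuous q)
    (hg₀ : ∀ w, 0 ≤ g w) {R : ℝ} (hR : ∀ w ∈ K, g w = 0 → R < q w) :
    ∀ᶠ M in atTop, ∀ w ∈ K, R < M * g w + q w := by
  have hnear : ∀ w ∈ K, ∀ᶠ z : ℝ × X in atTop ×ˢ 𝓝 w, R < z.1 * g z.2 + q z.2 := by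
    intro w hw
    obtain hgw | hgw := (hg₀ w).eq_or_lt
    · filter_upwards [tendsto_fst.eventually_ge_atTop 0,
        tendsto_snd.eventually ((hq.tendsto w).eventually_const_lt (hR w hw hgw.symm))] with z hM hz
      exact lt_add_of_nonneg_of_lt (mul_nonneg hM (hg₀ z.2)) hz
    · exact ((tendsto_fst.atTop_mul_pos hgw ((hg.tendsto w).comp tendsto_snd)).atTop_add
        ((hq.tendsto w).comp tendsto_snd)).eventually_gt_atTop R
  have hK_nhds : ∀ᶠ z : ℝ × X in atTop ×ˢ 𝓝ˢ K, R < z.1 * g z.2 + q z.2 :=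
    hK.mem_prod_nhdsSet_of_forall hnear
  exact hK_nhds.curry.mono fun M hM => hM.self_of_nhdsSet

variable [Fintype σ]

theorem norm_sq_le_sum_sq (w : σ → ℝ) : ‖w‖ ^ 2 ≤ ∑ s, w s ^ 2 := by
  have hw : 0 ≤ ∑ s, w s ^ 2 := Finset.sum_nonneg fun s _ => sq_nonneg (w s)
  rw [← Real.le_sqrt (norm_nonneg w) hw, pi_norm_le_iff_of_nonneg (Real.sqrt_nonneg _)]
  exact fun s => Real.abs_le_sqrt
    (Finset.single_le_sum (f := fun s => w s ^ 2) (fun s _ => sq_nonneg (w s)) (Finset.mem_univ s))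

/-- The penalized square norm `M * g + |w|²`, tilted by the linear form `a` in order to make its
critical points nondegenerate. -/
noncomputable def penalty (g : MvPolynomial σ ℝ) (M : ℝ) (a : σ → ℝ) : MvPolynomial σ ℝ :=
  C M * g + ∑ s, X s ^ 2 - ∑ s, C (a s) * X s

theorem eval_penalty (g : MvPolynomial σ ℝ) (M : ℝ) (a w : σ → ℝ) :
    eval w (penalty g M a) = M * eval w g + ∑ s, w s ^ 2 - ∑ s, a s * w s := by
  simp [penalty]

theorem pderiv_penalty (g : MvPolynomial σ ℝ) (M : ℝ) (a : σ → ℝ) (s : σ) :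
    pderiv s (penalty g M a) = pderiv s (penalty g M 0) - C (a s) := by
  classical
  simp [penalty, pderiv_X, Pi.single_apply]

theorem polyMap_pderiv_penalty (g : MvPolynomial σ ℝ) (M : ℝ) (a : σ → ℝ) :
    polyMap (fun s => pderiv s (penalty g M a)) =
      fun w => polyMap (fun s => pderiv s (penalty g M 0)) w - a := by
  ext w s
  simp [polyMap, pderiv_penalty g M a]

theorem isNondegenerateZero_pderiv_penalty_iff {g : MvPolynomial σ ℝ} {M : ℝ} {a p : σ → ℝ} :
    IsNondegenerateZero (fun s => pderiv s (penalty g M a)) p ↔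
      polyMap (fun s => pderiv s (penalty g M 0)) p = a ∧
        (fderiv ℝ (polyMap fun s => pderiv s (penalty g M 0)) p).det ≠ 0 := by
  rw [IsNondegenerateZero, polyMap_pderiv_penalty, fderiv_sub_const, sub_eq_zero]

theorem eventually_exists_isLocalMin_penalty {g : MvPolynomial σ ℝ} (hg : ∀ w, 0 ≤ eval w g)
    {U : Set (σ → ℝ)} (hU : IsOpen U) (hfrontier : ∀ w ∈ frontier U, eval w g ≠ 0)
    {x : σ → ℝ} (hxU : x ∈ U) (hx : eval x g = 0) :
    ∀ᶠ M in atTop, ∀ᶠ a in 𝓝 0, ∃ p ∈ U, IsLocalMin (fun w => eval w (penalty g M a)) p := by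
  let q (w : σ → ℝ) : ℝ := ∑ s, w s ^ 2
  have hq_cont : Continuous q := by fun_prop
  have hq (w : σ → ℝ) : ‖w‖ ^ 2 ≤ q w := norm_sq_le_sum_sq w
  let s := Metric.ball 0 (q x + 1) ∩ U
  let t := Metric.closedBall 0 (q x + 1) ∩ closure U
  have hs : IsOpen s := Metric.isOpen_ball.inter hU
  have ht : IsCompact t := (isCompact_closedBall _ _).inter_right isClosed_closure
  have hst : s ⊆ t := Set.inter_subset_inter Metric.ball_subset_closedBall subset_closure
  have hxt : x ∈ t := by
    refine ⟨?_, subset_closure hxU⟩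
    rw [mem_closedBall_zero_iff]
    nlinarith [hq x, norm_nonneg x]
  have hsphere : ∀ w ∈ t \ s, eval w g = 0 → q x < q w := by
    rintro w ⟨hwt, hws⟩ hw
    have hwU : w ∈ U := by
      by_contra hwU
      exact hfrontier w ⟨hwt.2, by rwa [hU.interior_eq]⟩ hw
    have hw_norm : q x + 1 ≤ ‖w‖ := by simpa [s, hwU] using hws
    nlinarith [hq w, hq x, sq_nonneg ‖x‖]
  filter_upwards [eventually_forall_lt_mul_add (ht.diff hs) (continuous_eval g) hq_cont hg
    hsphere] with M hM
  have hcont : Continuous fun z : (σ → ℝ) × (σ → ℝ) => eval z.2 (penalty g M z.1) := by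
    simp_rw [eval_penalty]
    have := continuous_eval g
    fun_prop
  refine (eventually_exists_isLocalMin hcont ht hs hst hxt fun w hw => ?_).mono
    fun a ⟨p, hp, hmin⟩ => ⟨p, hp.2, hmin⟩
  simpa [eval_penalty, hx] using hM w hw

theorem exists_isNondegenerateZero_pderiv_penalty {g : MvPolynomial σ ℝ}
    (hg : ∀ w, 0 ≤ eval w g) {ν : Type*} [Finite ν] {U : ν → Set (σ → ℝ)}
    (hU : ∀ i, IsOpen (U i)) (hfrontier : ∀ i, ∀ w ∈ frontier (U i), eval w g ≠ 0)
    (hzero : ∀ i, ∃ x ∈ U i, eval x g = 0) :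
    ∃ M a, ∀ i, ∃ p ∈ U i, IsNondegenerateZero (fun s => pderiv s (penalty g M a)) p := by
  choose x hxU hx using hzero
  obtain ⟨M, hM⟩ := (eventually_all.2 fun i =>
    eventually_exists_isLocalMin_penalty hg (hU i) (hfrontier i) (hxU i) (hx i)).exists
  let G := polyMap fun s => pderiv s (penalty g M 0)
  have hdense : Dense {a | ∀ w, G w = a → (fderiv ℝ G w).det ≠ 0} :=
    dense_regularValues fun w => (analyticAt_polyMap _ w).differentiableAt
  obtain ⟨a, ha_reg, ha_min⟩ : ∃ a, (∀ w, G w = a → (fderiv ℝ G w).det ≠ 0) ∧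
      ∀ i, ∃ p ∈ U i, IsLocalMin (fun w => eval w (penalty g M a)) p :=
    ((mem_closure_iff_frequently.1 (hdense 0)).and_eventually (eventually_all.2 hM)).exists
  refine ⟨M, a, fun i => ?_⟩
  obtain ⟨p, hpU, hp⟩ := ha_min i
  have hGp : G p = a := funext fun s => by
    have hcrit := eval_pderiv_eq_zero_of_isLocalMin hp s
    rwa [pderiv_penalty, map_sub, eval_C, sub_eq_zero] at hcrit
  exact ⟨p, hpU, isNondegenerateZero_pderiv_penalty_iff.2 ⟨hGp, ha_reg p hGp⟩⟩

end CriticalPoints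

section ConnectedComponents

variable {X : Type*} [TopologicalSpace X]

theorem finite_connectedComponents_of_forall_surjective {B : ℕ}
    (h : ∀ (n : ℕ) (c : X → Fin n), Continuous c → Function.Surjective c → n ≤ B) :
    Finite (ConnectedComponents X) := by
  by_contra hfin
  have : Infinite (ConnectedComponents X) := not_finite_iff_infinite.1 hfin
  obtain ⟨U, hU, hne, hdisj, hcover⟩ :=
    ConnectedComponents.exists_fun_isClopen_of_infinite X (B + 1) B.succ_pos
  choose c hc using fun x => Set.mem_iUnion.1 (hcover ▸ Set.mem_univ x)
  have hc_eq {i : Fin (B + 1)} {x : X} (hx : x ∈ U i) : c x = i :=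
    hdisj.eq (Set.not_disjoint_iff.2 ⟨x, hc x, hx⟩)
  have hfiber (i : Fin (B + 1)) : c ⁻¹' {i} = U i :=
    Set.ext fun x => ⟨fun hx => hx ▸ hc x, hc_eq⟩
  have hcont : Continuous c := continuous_discrete_rng.2 fun i => hfiber i ▸ (hU i).isOpen
  exact B.lt_irrefl (h (B + 1) c hcont fun i => (hne i).imp fun _ => hc_eq)

theorem card_connectedComponents_le_of_forall_surjective {B : ℕ}
    (h : ∀ (n : ℕ) (c : X → Fin n), Continuous c → Function.Surjective c → n ≤ B) :
    Finite (ConnectedComponents X) ∧ Nat.card (ConnectedComponents X) ≤ B := by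
  have hfin := finite_connectedComponents_of_forall_surjective h
  let e := Finite.equivFin (ConnectedComponents X)
  exact ⟨hfin, h _ (e ∘ ConnectedComponents.mk)
    ((continuous_of_discreteTopology (f := e)).comp ConnectedComponents.continuous_coe)
    (e.surjective.comp ConnectedComponents.surjective_coe)⟩

theorem exists_isOpen_separating [NormalSpace X] {Z : Set X} (hZ : IsClosed Z) {n : ℕ}
    {c : Z → Fin n} (hc : Continuous c) :
    ∃ U : Fin n → Set X, (∀ i, IsOpen (U i)) ∧ Pairwise (Function.onFun Disjoint U) ∧
      (∀ i, Disjoint (frontier (U i)) Z) ∧ ∀ z, ↑z ∈ U (c z) := by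
  let label : C(Z, ℝ) := ⟨fun z => ((c z : ℕ) : ℝ),
    (continuous_of_discreteTopology (f := fun i : Fin n => ((i : ℕ) : ℝ))).comp hc⟩
  obtain ⟨φ, hφ⟩ := ContinuousMap.exists_restrict_eq hZ label
  have hφ_eq (z : Z) : φ z = (c z : ℕ) := DFunLike.congr_fun hφ z
  refine ⟨fun i => φ ⁻¹' Metric.ball (i : ℕ) (1 / 2), fun i =>
    Metric.isOpen_ball.preimage φ.continuous, fun i j hij => ?_, fun i => ?_, fun z => ?_⟩
  · refine (Metric.ball_disjoint_ball ?_).preimage φ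
    rw [add_halves, Nat.dist_cast_real]
    exact Nat.pairwise_one_le_dist (Fin.val_injective.ne hij)
  · refine Set.disjoint_left.2 fun x hx hxZ => ?_
    have hdist : dist ((c ⟨x, hxZ⟩ : ℕ) : ℝ) (i : ℕ) = 1 / 2 := by
      rw [← hφ_eq]
      exact Metric.frontier_ball_subset_sphere (φ.continuous.frontier_preimage_subset _ hx)
    obtain heq | hne := eq_or_ne (c ⟨x, hxZ⟩) i
    · norm_num [heq] at hdist
    · have := Nat.pairwise_one_le_dist (Fin.val_injective.ne hne)
      rw [Nat.dist_cast_real] at hdist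
      linarith
  · simp [hφ_eq]

end ConnectedComponents

section Preimage

variable {ι : Type*} {κ : ι → Type*} [∀ i, Fintype (κ i)] [Fintype ι] {d : ι → ℕ}

theorem penalty_mem_restrictBlockDegree (hd : ∀ i, 1 ≤ d i)
    {g : MvPolynomial ((i : ι) × κ i) ℝ} (hg : g ∈ restrictBlockDegree κ ℝ (2 • d)) (M : ℝ)
    (a : (i : ι) × κ i → ℝ) : penalty g M a ∈ restrictBlockDegree κ ℝ (2 • d) := by
  have hX (s : (i : ι) × κ i) : X s ∈ restrictBlockDegree κ ℝ d :=
    X_mem_restrictBlockDegree s (hd s.1)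
  have hX' (s : (i : ι) × κ i) : X s ∈ restrictBlockDegree κ ℝ (2 • d) :=
    restrictBlockDegree_mono (le_smul_of_one_le_left zero_le one_le_two) (hX s)
  simp_rw [penalty, ← smul_eq_C_mul]
  exact Submodule.sub_mem _
    (Submodule.add_mem _ (Submodule.smul_mem _ M hg)
      (Submodule.sum_mem _ fun s _ => pow_mem_restrictBlockDegree (hX s) 2))
    (Submodule.sum_mem _ fun s _ => Submodule.smul_mem _ (a s) (hX' s))

theorem card_le_of_surjective_polyMap_preimage {J : Type*} [Finite J] (hd : ∀ i, 1 ≤ d i)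
    {θ : J → MvPolynomial ((i : ι) × κ i) ℝ} (hθ : ∀ j, θ j ∈ restrictBlockDegree κ ℝ d)
    (y : J → ℝ) {n : ℕ} {c : polyMap θ ⁻¹' {y} → Fin n} (hc : Continuous c)
    (hsurj : Function.Surjective c) :
    n ≤ Nat.multinomial Finset.univ (fun i => Fintype.card (κ i)) *
      ∏ i, (2 * d i) ^ Fintype.card (κ i) := by
  cases nonempty_fintype J
  let g : MvPolynomial ((i : ι) × κ i) ℝ := ∑ j, (θ j - C (y j)) ^ 2
  have hg_deg : g ∈ restrictBlockDegree κ ℝ (2 • d) := Submodule.sum_mem _ fun j _ =>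
    pow_mem_restrictBlockDegree (Submodule.sub_mem _ (hθ j) (C_mem_restrictBlockDegree d (y j))) 2
  have hg (w : (i : ι) × κ i → ℝ) : eval w g = ∑ j, (eval w (θ j) - y j) ^ 2 := by simp [g]
  have hg_zero (w : (i : ι) × κ i → ℝ) : eval w g = 0 ↔ w ∈ polyMap θ ⁻¹' {y} := by
    simp [hg, Finset.sum_eq_zero_iff_of_nonneg, sq_nonneg, sub_eq_zero, polyMap, funext_iff]
  have hclosed : IsClosed (polyMap θ ⁻¹' {y}) :=
    isClosed_singleton.preimage (continuous_pi fun j => continuous_eval (θ j))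
  obtain ⟨U, hU, hdisj, hfrontier, hmem⟩ := exists_isOpen_separating hclosed hc
  obtain ⟨M, a, hcrit⟩ := exists_isNondegenerateZero_pderiv_penalty (g := g)
    (fun w => (hg w).symm ▸ Finset.sum_nonneg fun j _ => sq_nonneg _) hU
    (fun i w hw hw0 => Set.disjoint_left.1 (hfrontier i) hw ((hg_zero w).1 hw0))
    (fun i => (hsurj i).elim fun z hz => ⟨z, hz ▸ hmem z, (hg_zero z).2 z.2⟩)
  choose p hpU hp using hcrit
  have hinj : Function.Injective p := fun i j hij =>
    hdisj.eq (Set.not_disjoint_iff.2 ⟨p i, hpU i, hij ▸ hpU j⟩)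
  simpa using card_nondegenerateZero_le (fun s => pderiv_mem_restrictBlockDegree s
    (penalty_mem_restrictBlockDegree hd hg_deg M a)) hinj hp

end Preimage

section Entropy

variable {ι : Type*} [Fintype ι] {k d : ι → ℕ} {K D : ℕ} {H : ℝ}

theorem two_rpow_mul_entropy (hk : ∀ i, 1 ≤ k i) (hd : ∀ i, 1 ≤ d i) (hK : K = ∑ i, k i)
    (hD : D = ∑ i, d i)
    (hH : H = ∑ i, ((k i : ℝ) / K) * Real.logb 2 ((D * k i : ℝ) / (K * d i))) :
    (2 : ℝ) ^ ((K : ℝ) * H) = ∏ i, ((D * k i : ℝ) / (K * d i)) ^ k i := by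
  rw [hH, Finset.mul_sum, Real.rpow_sum_of_pos two_pos]
  refine Finset.prod_congr rfl fun i _ => ?_
  have hki : 0 < k i := hk i
  have hdi : 0 < d i := hd i
  have hK_pos : 0 < K := hK ▸ Finset.sum_pos (fun j _ => hk j) ⟨i, Finset.mem_univ i⟩
  have hD_pos : 0 < D := hD ▸ Finset.sum_pos (fun j _ => hd j) ⟨i, Finset.mem_univ i⟩
  rw [← mul_assoc, mul_div_cancel₀ _ (by positivity), mul_comm, Real.rpow_mul_natCast two_pos.le,
    Real.rpow_logb two_pos (by norm_num) (by positivity)]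

theorem multinomial_mul_prod_pow_le_entropy (hk : ∀ i, 1 ≤ k i) (hd : ∀ i, 1 ≤ d i)
    (hK : K = ∑ i, k i) (hD : D = ∑ i, d i)
    (hH : H = ∑ i, ((k i : ℝ) / K) * Real.logb 2 ((D * k i : ℝ) / (K * d i))) :
    (Nat.multinomial Finset.univ k : ℝ) * ∏ i, (2 * d i : ℝ) ^ k i ≤
      (2 * D : ℝ) ^ K * (2 : ℝ) ^ (-((K : ℝ) * H)) := by
  have hmult : (Nat.multinomial Finset.univ k : ℝ) * ∏ i, (k i : ℝ) ^ k i ≤ (K : ℝ) ^ K := by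
    rw [hK]
    exact_mod_cast multinomial_mul_prod_pow_self_le k
  calc (Nat.multinomial Finset.univ k : ℝ) * ∏ i, (2 * d i : ℝ) ^ k i
      = (Nat.multinomial Finset.univ k * ∏ i, (k i : ℝ) ^ k i) *
          ∏ i, (2 * d i / k i : ℝ) ^ k i := by
        rw [mul_assoc, ← Finset.prod_mul_distrib]
        congr! 2 with i
        have hki : k i ≠ 0 := Nat.one_le_iff_ne_zero.1 (hk i)
        rw [← mul_pow]
        field_simp
    _ ≤ (K : ℝ) ^ K * ∏ i, (2 * d i / k i : ℝ) ^ k i := by gcongr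
    _ = (2 * D : ℝ) ^ K * ∏ i, ((D * k i : ℝ) / (K * d i))⁻¹ ^ k i := by
        have hpow (c : ℝ) : c ^ K = ∏ i, c ^ k i := by rw [Finset.prod_pow_eq_pow_sum, hK]
        simp_rw [hpow, ← Finset.prod_mul_distrib, ← mul_pow]
        refine Finset.prod_congr rfl fun i _ => ?_
        have hD_pos : 0 < D := hD ▸ Finset.sum_pos (fun j _ => hd j) ⟨i, Finset.mem_univ i⟩
        field_simp
    _ = (2 * D : ℝ) ^ K * (2 : ℝ) ^ (-((K : ℝ) * H)) := by
        rw [Real.rpow_neg two_pos.le, two_rpow_mul_entropy hk hd hK hD hH,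
          ← Finset.prod_inv_distrib]
        simp_rw [inv_pow]

end Entropy

theorem blockwise_entropy_bound_components_general {ι J : Type*} {κ : ι → Type*} [Fintype ι]
    [∀ i, Fintype (κ i)] [∀ i, Nonempty (κ i)] [Finite J] {d : ι → ℕ} (hd : ∀ i, 1 ≤ d i)
    {K : ℕ} (hK : K = ∑ i, Fintype.card (κ i)) {D : ℕ} (hD : D = ∑ i, d i) {H : ℝ}
    (hH : H = ∑ i, ((Fintype.card (κ i) : ℝ) / K) *
      Real.logb 2 ((D * Fintype.card (κ i) : ℝ) / (K * d i)))
    {θ : J → MvPolynomial ((i : ι) × κ i) ℝ} (hθ : ∀ j, θ j ∈ restrictBlockDegree κ ℝ d)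
    (y : J → ℝ) :
    Finite (ConnectedComponents (polyMap θ ⁻¹' {y})) ∧
      (Nat.card (ConnectedComponents (polyMap θ ⁻¹' {y})) : ℝ) ≤
        (2 * D : ℝ) ^ K * (2 : ℝ) ^ (-((K : ℝ) * H)) := by
  obtain ⟨hfin, hcard⟩ := card_connectedComponents_le_of_forall_surjective fun _ _ hc hsurj =>
    card_le_of_surjective_polyMap_preimage hd hθ y hc hsurj
  refine ⟨hfin, (Nat.cast_le.2 hcard).trans ?_⟩
  exact_mod_cast multinomial_mul_prod_pow_le_entropy (fun _ => Fintype.card_pos) hd hK hD hH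

/-- With the `k = Σ kᵢ` variables partitioned into `l` blocks of sizes `kᵢ`,
every monomial of every `θ_j` of total degree at most `dᵢ` in block `i`, `d = Σ dᵢ`, and
`H(v|u) = Σᵢ (kᵢ/k)·lg(d·kᵢ/(k·dᵢ))`, if `y` is a regular value of `f = (θ₁,…,θ_r)` then
`f⁻¹(y)` has at most `(2d)^k · 2^{−k·H(v|u)}` connected components. -/
theorem blockwise_entropy_bound_components
    (l : ℕ) (hl : 1 ≤ l) (k : Fin l → ℕ) (hk : ∀ i, 1 ≤ k i)
    (d : Fin l → ℕ) (hd : ∀ i, 1 ≤ d i)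
    (K : ℕ) (hK : K = ∑ i, k i)
    (D : ℕ) (hD : D = ∑ i, d i)
    (H : ℝ) (hH : H = ∑ i, ((k i : ℝ) / K) * Real.logb 2 ((D * k i : ℝ) / (K * d i)))
    (r : ℕ)
    (θ : Fin r → MvPolynomial ((i : Fin l) × Fin (k i)) ℝ)
    (hdeg : ∀ j, ∀ m ∈ (θ j).support, ∀ i : Fin l,
      ∑ t : Fin (k i), m ⟨i, t⟩ ≤ d i)
    (f : (((i : Fin l) × Fin (k i)) → ℝ) → (Fin r → ℝ))
    (hf : ∀ w j, f w j = MvPolynomial.eval w (θ j))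
    (y : Fin r → ℝ)
    (hreg : ∀ x ∈ f ⁻¹' {y}, Function.Surjective (fderiv ℝ f x)) :
    Finite (ConnectedComponents ↥(f ⁻¹' {y})) ∧
      (Nat.card (ConnectedComponents ↥(f ⁻¹' {y})) : ℝ) ≤
        (2 * D : ℝ) ^ K * (2 : ℝ) ^ (-((K : ℝ) * H)) := by
  obtain rfl : f = polyMap θ := funext fun w => funext (hf w)
  have (i : Fin l) : Nonempty (Fin (k i)) := Fin.pos_iff_nonempty.1 (hk i)
  exact blockwise_entropy_bound_components_general hd (by simpa using hK) hD (by simpa using hH)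
    hdeg y
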